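/- arXiv:1310.6961 — 3 statements merged into one kernel-verified Lean document; each statement's English description precedes it below -/
import Mathlib

section
/- Let X and Y be Banach spaces, T>0, θ∈(0,1] and 0≤δ<θ+1. Let M:[0,T)→L(X,Y) be continuously differentiable with ‖M'(s)‖ ≤ C(T−s)^{−δ} for all s∈[0,T). Let f:(0,T)→X be strongly measurable and Bochner integrable on (0,t) for every t<T, suppose s↦M(s)f(s) is Bochner integrable on (0,T), and suppose the function F(t):=∫_0^t f(s) ds extends to a θ-Hölder continuous function F:[0,T]→X. Then s↦M'(s)(F(T)−F(s)) is Bochner integrable on (0,T) and ∫_0^T M(s) f(s) ds = M(0) F(T) + ∫_0^T M'(s) (F(T)−F(s)) ds. -/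
/-!
The identity on `(0, t)` with `t < T` is Fubini's theorem on the triangle `{r < s}`: writing
`M s = M 0 + ∫_0^s M'`, the iterated integral of `M' r (f s)` turns `∫_0^t (M s - M 0) (f s) ds` into
`∫_0^t M' r (F t - F r) dr`. Replacing `F t` by `F T` inside the integral costs the boundary term
`M t (F T - F t)` (`integral_by_parts_Ioo`).

To let `t → T`, the exponent `δ` may be enlarged so that `1 < δ < θ + 1`. Then
`‖M' s (F T - F s)‖ = O((T - s) ^ (θ - δ))` with `θ - δ > -1`, which gives integrability, and
`‖M t‖ = O(1 + (T - t) ^ (1 - δ))`, so the boundary term is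
`O((T - t) ^ θ + (T - t) ^ (θ + 1 - δ))` and tends to zero.
-/

open MeasureTheory Set

open Filter Topology

/-- Fubini's theorem on the triangle `0 < r < s < t` for the operator-vector pairing. -/
lemma integral_triangle_swap
    {X Y : Type*} [NormedAddCommGroup X] [NormedSpace ℝ X] [CompleteSpace X]
    [NormedAddCommGroup Y] [NormedSpace ℝ Y] [CompleteSpace Y]
    {t : ℝ} {A : ℝ → (X →L[ℝ] Y)} {f : ℝ → X}
    (hA : IntegrableOn A (Ioo 0 t)) (hf : IntegrableOn f (Ioo 0 t)) :
    ∫ s in Ioo (0:ℝ) t, (∫ r in Ioo (0:ℝ) s, A r) (f s)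
      = ∫ r in Ioo (0:ℝ) t, A r (∫ s in Ioo r t, f s) := by
  have hint : Integrable (fun z : ℝ × ℝ => A z.1 (f z.2))
      ((volume.restrict (Ioo 0 t)).prod (volume.restrict (Ioo 0 t))) := by
    refine Integrable.op_fst_snd (op := fun (L : X →L[ℝ] Y) (x : X) => L x) ?_ ⟨1, ?_⟩ hA hf
    · exact isBoundedBilinearMap_apply.continuous
    · intro L x
      simpa using L.le_opNorm x
  have hms : MeasurableSet {z : ℝ × ℝ | z.1 < z.2} := measurableSet_lt measurable_fst measurable_snd
  have hswap := integral_integral_swap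
    (f := fun r s => {z : ℝ × ℝ | z.1 < z.2}.indicator (fun z : ℝ × ℝ => A z.1 (f z.2)) (r, s))
    (hint.indicator hms)
  have hL : ∀ r ∈ Ioo (0:ℝ) t, ∫ s in Ioo (0:ℝ) t,
      {z : ℝ × ℝ | z.1 < z.2}.indicator (fun z : ℝ × ℝ => A z.1 (f z.2)) (r, s)
        = A r (∫ s in Ioo r t, f s) := by
    intro r hr
    have h1 : Ioo (0:ℝ) t ∩ Ioi r = Ioo r t := by
      ext s
      simp only [mem_inter_iff, mem_Ioo, mem_Ioi]
      have := hr.1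
      constructor
      · rintro ⟨⟨_, h⟩, h'⟩
        exact ⟨h', h⟩
      · rintro ⟨h', h⟩
        exact ⟨⟨by linarith, h⟩, h'⟩
    have h2 : ∀ s, {z : ℝ × ℝ | z.1 < z.2}.indicator (fun z : ℝ × ℝ => A z.1 (f z.2)) (r, s)
        = (Ioi r).indicator (fun s => A r (f s)) s := by
      intro s
      simp [indicator]
    simp_rw [h2]
    rw [setIntegral_indicator measurableSet_Ioi, h1]
    exact (A r).integral_comp_comm (hf.mono_set (Ioo_subset_Ioo_left hr.1.le))
  have hR : ∀ s ∈ Ioo (0:ℝ) t, ∫ r in Ioo (0:ℝ) t,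
      {z : ℝ × ℝ | z.1 < z.2}.indicator (fun z : ℝ × ℝ => A z.1 (f z.2)) (r, s)
        = (∫ r in Ioo (0:ℝ) s, A r) (f s) := by
    intro s hs
    have h1 : Ioo (0:ℝ) t ∩ Iio s = Ioo 0 s := by
      ext r
      simp only [mem_inter_iff, mem_Ioo, mem_Iio]
      have := hs.2
      constructor
      · rintro ⟨⟨h, _⟩, h'⟩
        exact ⟨h, h'⟩
      · rintro ⟨h, h'⟩
        exact ⟨⟨h, by linarith⟩, h'⟩
    have h2 : ∀ r, {z : ℝ × ℝ | z.1 < z.2}.indicator (fun z : ℝ × ℝ => A z.1 (f z.2)) (r, s)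
        = (Iio s).indicator (fun r => A r (f s)) r := by
      intro r
      simp [indicator]
    simp_rw [h2]
    rw [setIntegral_indicator measurableSet_Iio, h1]
    exact (ContinuousLinearMap.integral_apply
      (hA.mono_set (Ioo_subset_Ioo_right hs.2.le)) (f s)).symm
  rw [setIntegral_congr_fun measurableSet_Ioo hL, setIntegral_congr_fun measurableSet_Ioo hR]
    at hswap
  exact hswap.symm

/-- Integration by parts against a merely integrable `f`, away from the singularity of `M'`.
The antiderivative of `-f` used here is `x - F` for an arbitrary vector `x`. -/
lemma integral_by_parts_Ioo
    {X Y : Type*} [NormedAddCommGroup X] [NormedSpace ℝ X] [CompleteSpace X]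
    [NormedAddCommGroup Y] [NormedSpace ℝ Y] [CompleteSpace Y]
    {t : ℝ} (ht : 0 ≤ t) {M M' : ℝ → (X →L[ℝ] Y)} {f F : ℝ → X}
    (hM : ContinuousOn M (Icc 0 t)) (hMd : ∀ s ∈ Ioo (0:ℝ) t, HasDerivAt M (M' s) s)
    (hM' : ContinuousOn M' (Icc 0 t)) (hf : IntegrableOn f (Ioo 0 t))
    (hMf : IntegrableOn (fun s => M s (f s)) (Ioo 0 t))
    (hF : ∀ s ∈ Icc (0:ℝ) t, F s = ∫ r in Ioo (0:ℝ) s, f r)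
    (hFc : ContinuousOn F (Icc 0 t)) (x : X) :
    ∫ s in Ioo (0:ℝ) t, M s (f s)
      = M 0 x - M t (x - F t) + ∫ s in Ioo (0:ℝ) t, M' s (x - F s) := by
  have hftc : ∀ s ∈ Icc (0:ℝ) t, ∫ r in Ioo (0:ℝ) s, M' r = M s - M 0 := by
    intro s hs
    have hsub : Icc (0:ℝ) s ⊆ Icc 0 t := Icc_subset_Icc_right hs.2
    rw [← integral_Ioc_eq_integral_Ioo, ← intervalIntegral.integral_of_le hs.1]
    refine intervalIntegral.integral_eq_sub_of_hasDerivAt_of_le hs.1 (hM.mono hsub)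
      (fun r hr => hMd r ⟨hr.1, hr.2.trans_le hs.2⟩) ?_
    exact ContinuousOn.intervalIntegrable_of_Icc hs.1 (hM'.mono hsub)
  have hM'i : IntegrableOn M' (Ioo 0 t) := hM'.integrableOn_Icc.mono_set Ioo_subset_Icc_self
  have hswap := integral_triangle_swap hM'i hf
  have h1 : ∫ s in Ioo (0:ℝ) t, (∫ r in Ioo (0:ℝ) s, M' r) (f s)
      = (∫ s in Ioo (0:ℝ) t, M s (f s)) - M 0 (F t) := by
    have : ∀ s ∈ Ioo (0:ℝ) t, (∫ r in Ioo (0:ℝ) s, M' r) (f s) = M s (f s) - M 0 (f s) := by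
      intro s hs
      rw [hftc s (Ioo_subset_Icc_self hs), _root_.sub_apply]
    rw [setIntegral_congr_fun measurableSet_Ioo this,
      integral_sub hMf ((M 0).integrable_comp hf), (M 0).integral_comp_comm hf,
      hF t ⟨ht, le_rfl⟩]
  have hcI : ∀ y : X, IntegrableOn (fun s => M' s (y - F s)) (Ioo 0 t) := fun y =>
    ((hM'.clm_apply (continuousOn_const.sub hFc)).integrableOn_Icc).mono_set Ioo_subset_Icc_self
  have h2 : ∫ r in Ioo (0:ℝ) t, M' r (∫ s in Ioo r t, f s)
      = ∫ r in Ioo (0:ℝ) t, M' r (F t - F r) := by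
    refine setIntegral_congr_fun measurableSet_Ioo fun r hr => ?_
    have hsplit : F t = F r + ∫ s in Ioo r t, f s := by
      rw [hF t ⟨ht, le_rfl⟩, hF r (Ioo_subset_Icc_self hr),
        ← integral_Ioc_eq_integral_Ioo, ← integral_Ioc_eq_integral_Ioo,
        ← integral_Ioc_eq_integral_Ioo, ← intervalIntegral.integral_of_le ht,
        ← intervalIntegral.integral_of_le hr.1.le, ← intervalIntegral.integral_of_le hr.2.le]
      refine (intervalIntegral.integral_add_adjacent_intervals ?_ ?_).symm
      · rw [intervalIntegrable_iff_integrableOn_Ioo_of_le hr.1.le]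
        exact hf.mono_set (Ioo_subset_Ioo_right hr.2.le)
      · rw [intervalIntegrable_iff_integrableOn_Ioo_of_le hr.2.le]
        exact hf.mono_set (Ioo_subset_Ioo_left hr.1.le)
    simp only [hsplit, add_sub_cancel_left]
  have h3 : ∫ r in Ioo (0:ℝ) t, M' r (x - F r)
      = (∫ r in Ioo (0:ℝ) t, M' r (F t - F r)) + (M t - M 0) (x - F t) := by
    have hconst : ∫ r in Ioo (0:ℝ) t, M' r (x - F t) = (M t - M 0) (x - F t) := by
      rw [← ContinuousLinearMap.integral_apply hM'i, hftc t ⟨ht, le_rfl⟩]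
    have hci : IntegrableOn (fun r => M' r (x - F t)) (Ioo 0 t) :=
      ((hM'.clm_apply continuousOn_const).integrableOn_Icc).mono_set Ioo_subset_Icc_self
    rw [← hconst, ← integral_add (hcI (F t)) hci]
    refine integral_congr_ae (ae_of_all _ fun r => ?_)
    simp only [← map_add]
    congr 1
    abel
  rw [h1, h2] at hswap
  rw [h3, ← hswap]
  simp only [_root_.sub_apply, map_sub]
  abel

lemma tendsto_setIntegral_Ioo_left
    {E : Type*} [NormedAddCommGroup E] [NormedSpace ℝ E] {T : ℝ} (hT : 0 < T) {g : ℝ → E}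
    (hg : IntegrableOn g (Ioo 0 T)) :
    Tendsto (fun t => ∫ s in Ioo (0:ℝ) t, g s) (𝓝[<] T) (𝓝 (∫ s in Ioo (0:ℝ) T, g s)) := by
  have hg' : IntegrableOn g (Icc 0 T) := by rwa [integrableOn_Icc_iff_integrableOn_Ioo]
  have h := intervalIntegral.continuousOn_primitive hg' T ⟨hT.le, le_rfl⟩
  simp only [ContinuousWithinAt, integral_Ioc_eq_integral_Ioo] at h
  refine h.mono_left ?_
  rw [← nhdsWithin_Ioo_eq_nhdsLT hT]
  exact nhdsWithin_mono _ Ioo_subset_Icc_self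

/-- A derivative bound of order `(T - t) ^ (-δ)` with `δ > 1` integrates to a bound of order
`(T - t) ^ (1 - δ)`. -/
lemma norm_le_of_deriv_rpow_bound
    {E : Type*} [NormedAddCommGroup E] [NormedSpace ℝ E] {T δ C : ℝ} (hδ : 1 < δ) (hC : 0 ≤ C)
    {M M' : ℝ → E}
    (hMd : ∀ t ∈ Ico (0:ℝ) T, HasDerivWithinAt M (M' t) (Ico 0 T) t)
    (hb : ∀ t ∈ Ico (0:ℝ) T, ‖M' t‖ ≤ C * (T - t) ^ (-δ)) {t : ℝ} (ht : t ∈ Ico (0:ℝ) T) :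
    ‖M t‖ ≤ ‖M 0‖ + C / (δ - 1) * (T - t) ^ (1 - δ) := by
  have hδ' : 0 < δ - 1 := by linarith
  have hBd : ∀ s ∈ Icc (0:ℝ) t, HasDerivAt (fun s => ‖M 0‖ + C / (δ - 1) * (T - s) ^ (1 - δ))
      (C * (T - s) ^ (-δ)) s := by
    intro s hs
    have hpos : T - s ≠ 0 := by linarith [hs.2, ht.2]
    have h1 : HasDerivAt (fun s => T - s) (-1) s := by
      simpa using (hasDerivAt_id s).const_sub T
    have h2 := ((h1.rpow_const (p := 1 - δ) (Or.inl hpos)).const_mul (C / (δ - 1))).const_add ‖M 0‖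
    have hval : C / (δ - 1) * (-1 * (1 - δ) * (T - s) ^ (1 - δ - 1)) = C * (T - s) ^ (-δ) := by
      rw [show 1 - δ - 1 = -δ by ring]
      field_simp
      ring
    rwa [hval] at h2
  have hT : 0 < T := ht.1.trans_lt ht.2
  refine image_norm_le_of_norm_deriv_right_le_deriv_boundary' (a := 0) (b := t) (f := M) (f' := M')
    (B := fun s => ‖M 0‖ + C / (δ - 1) * (T - s) ^ (1 - δ)) (B' := fun s => C * (T - s) ^ (-δ))
    ?_ ?_ ?_ ?_ ?_ ?_ ⟨ht.1, le_rfl⟩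
  · intro s hs
    exact ((hMd s ⟨hs.1, hs.2.trans_lt ht.2⟩).continuousWithinAt).mono
      fun r hr => ⟨hr.1, hr.2.trans_lt ht.2⟩
  · intro s hs
    refine (hMd s ⟨hs.1, hs.2.trans ht.2⟩).mono_of_mem_nhdsWithin ?_
    exact mem_of_superset (Ico_mem_nhdsGE (hs.2.trans ht.2)) (Ico_subset_Ico_left hs.1)
  · have : 0 ≤ C / (δ - 1) * (T - 0) ^ (1 - δ) := by
      rw [sub_zero]
      positivity
    linarith
  · exact fun s hs => (hBd s hs).continuousAt.continuousWithinAt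
  · exact fun s hs => (hBd s (Ico_subset_Icc_self hs)).hasDerivWithinAt
  · exact fun s hs => hb s ⟨hs.1, hs.2.trans ht.2⟩

/-- The deterministic integration-by-parts identity underlying Theorem 5.1
(formula (5.1)): `∫_0^T M(s) f(s) ds = M(0) F(T) + ∫_0^T M'(s)(F(T) - F(s)) ds`
for a multiplier `M` with a possibly singular derivative at `t = T` and `F` the
Hölder-continuous antiderivative of `f`. -/
theorem stmt9
    {X Y : Type*} [NormedAddCommGroup X] [NormedSpace ℝ X] [CompleteSpace X]
    [NormedAddCommGroup Y] [NormedSpace ℝ Y] [CompleteSpace Y]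
    (T θ δ C K : ℝ) (hT : 0 < T) (hθ : θ ∈ Ioc (0:ℝ) 1)
    (hδ0 : 0 ≤ δ) (hδ : δ < θ + 1)
    (M M' : ℝ → (X →L[ℝ] Y))
    (hMderiv : ∀ t ∈ Ico (0:ℝ) T, HasDerivWithinAt M (M' t) (Ico 0 T) t)
    (hM'cont : ContinuousOn M' (Ico 0 T))
    (hM'bound : ∀ t ∈ Ico (0:ℝ) T, ‖M' t‖ ≤ C * (T - t) ^ (-δ))
    (f : ℝ → X)
    (hfm : AEStronglyMeasurable f (volume.restrict (Ioo 0 T)))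
    (hfint : ∀ t < T, IntegrableOn f (Ioo 0 t))
    (hMf : IntegrableOn (fun s => (M s) (f s)) (Ioo 0 T))
    (F : ℝ → X)
    (hF : ∀ t ∈ Ico (0:ℝ) T, F t = ∫ s in Ioo (0:ℝ) t, f s)
    (hFHolder : ∀ s t : ℝ, 0 ≤ s → s ≤ t → t ≤ T → ‖F t - F s‖ ≤ K * (t - s) ^ θ) :
    IntegrableOn (fun s => (M' s) (F T - F s)) (Ioo 0 T) ∧
    (∫ s in Ioo (0:ℝ) T, (M s) (f s)) =
      (M 0) (F T) + ∫ s in Ioo (0:ℝ) T, (M' s) (F T - F s) := by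
  have hθ0 : 0 < θ := hθ.1
  have hK : 0 ≤ K := by
    have h := (norm_nonneg _).trans (hFHolder 0 T le_rfl hT.le le_rfl)
    exact nonneg_of_mul_nonneg_left h (Real.rpow_pos_of_pos (by linarith) _)
  have hC : 0 ≤ C := by
    have h := (norm_nonneg _).trans (hM'bound 0 ⟨le_rfl, hT⟩)
    exact nonneg_of_mul_nonneg_left h (Real.rpow_pos_of_pos (by linarith) _)
  -- Enlarging the exponent avoids the separate cases `δ < 1` and `δ = 1`.
  obtain ⟨ε, hε, hε'⟩ := exists_between (max_lt hδ (by linarith : (1:ℝ) < θ + 1))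
  have hε1 : 1 < ε := (le_max_right _ _).trans_lt hε
  have hδε : δ < ε := (le_max_left _ _).trans_lt hε
  obtain ⟨D, hD, hb⟩ : ∃ D : ℝ, 0 ≤ D ∧ ∀ t ∈ Ico (0:ℝ) T, ‖M' t‖ ≤ D * (T - t) ^ (-ε) := by
    refine ⟨C * T ^ (ε - δ), by positivity, fun t ht => (hM'bound t ht).trans ?_⟩
    have hpos : 0 < T - t := by linarith [ht.2]
    rw [mul_assoc, show -δ = (ε - δ) + -ε by ring, Real.rpow_add hpos]
    have hle : (T - t) ^ (ε - δ) ≤ T ^ (ε - δ) :=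
      Real.rpow_le_rpow hpos.le (by linarith [ht.1]) (by linarith)
    gcongr
  have hFc : ContinuousOn F (Icc 0 T) := by
    intro s hs
    have hlim : Tendsto (fun r => K * |r - s| ^ θ) (𝓝[Icc 0 T] s) (𝓝 0) := by
      have : Continuous fun r : ℝ => K * |r - s| ^ θ :=
        continuous_const.mul ((by fun_prop : Continuous fun r : ℝ => |r - s|).rpow_const
          fun _ => Or.inr hθ0.le)
      simpa [hθ0.ne'] using (this.tendsto s).mono_left nhdsWithin_le_nhds
    refine tendsto_iff_norm_sub_tendsto_zero.2 (squeeze_zero' (.of_forall fun _ => norm_nonneg _)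
      ?_ hlim)
    filter_upwards [self_mem_nhdsWithin] with r hr
    rcases le_total s r with h | h
    · rw [abs_of_nonneg (sub_nonneg.2 h)]
      exact hFHolder s r hs.1 h hr.2
    · rw [abs_sub_comm, abs_of_nonneg (sub_nonneg.2 h), norm_sub_rev]
      exact hFHolder r s hr.1 h hs.2
  have hInt : IntegrableOn (fun s => (M' s) (F T - F s)) (Ioo 0 T) := by
    have hdom : IntegrableOn (fun s => D * K * (T - s) ^ (θ - ε)) (Ioo 0 T) := by
      have h := (intervalIntegral.intervalIntegrable_rpow' (a := T) (b := 0)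
        (by linarith : -1 < θ - ε)).comp_sub_left T
      rw [sub_self, sub_zero, intervalIntegrable_iff_integrableOn_Ioo_of_le hT.le] at h
      exact h.const_mul _
    refine Integrable.mono' hdom ?_ ?_
    · refine ContinuousOn.aestronglyMeasurable ?_ measurableSet_Ioo
      exact (hM'cont.mono Ioo_subset_Ico_self).clm_apply
        (continuousOn_const.sub (hFc.mono Ioo_subset_Icc_self))
    · refine (ae_restrict_iff' measurableSet_Ioo).2 (ae_of_all _ fun s hs => ?_)
      have hpos : 0 < T - s := by linarith [hs.2]
      calc ‖M' s (F T - F s)‖ ≤ ‖M' s‖ * ‖F T - F s‖ := (M' s).le_opNorm _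
        _ ≤ (D * (T - s) ^ (-ε)) * (K * (T - s) ^ θ) :=
          mul_le_mul (hb s (Ioo_subset_Ico_self hs)) (hFHolder s T hs.1.le hs.2.le le_rfl)
            (norm_nonneg _) (by positivity)
        _ = D * K * (T - s) ^ (θ - ε) := by
          rw [sub_eq_add_neg θ ε, Real.rpow_add hpos]
          ring
  refine ⟨hInt, ?_⟩
  have hbdry : Tendsto (fun t => M t (F T - F t)) (𝓝[<] T) (𝓝 0) := by
    have hpow : ∀ p : ℝ, 0 < p → Tendsto (fun t => (T - t) ^ p) (𝓝[<] T) (𝓝 0) := by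
      intro p hp
      have : Continuous fun t : ℝ => (T - t) ^ p :=
        (by fun_prop : Continuous fun t : ℝ => T - t).rpow_const fun _ => Or.inr hp.le
      simpa [hp.ne'] using (this.tendsto T).mono_left nhdsWithin_le_nhds
    have hlim : Tendsto (fun t => ‖M 0‖ * K * (T - t) ^ θ
        + D / (ε - 1) * K * (T - t) ^ (θ + 1 - ε)) (𝓝[<] T) (𝓝 0) := by
      simpa using ((hpow θ hθ0).const_mul (‖M 0‖ * K)).add
        ((hpow (θ + 1 - ε) (by linarith)).const_mul (D / (ε - 1) * K))
    refine squeeze_zero_norm' ?_ hlim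
    filter_upwards [Ioo_mem_nhdsLT hT] with t ht
    have hpos : 0 < T - t := by linarith [ht.2]
    have hM := norm_le_of_deriv_rpow_bound hε1 hD hMderiv hb (Ioo_subset_Ico_self ht)
    calc ‖M t (F T - F t)‖ ≤ ‖M t‖ * ‖F T - F t‖ := (M t).le_opNorm _
      _ ≤ (‖M 0‖ + D / (ε - 1) * (T - t) ^ (1 - ε)) * (K * (T - t) ^ θ) :=
        mul_le_mul hM (hFHolder t T ht.1.le ht.2.le le_rfl) (norm_nonneg _)
          ((norm_nonneg _).trans hM)
      _ = _ := by
        rw [show θ + 1 - ε = (1 - ε) + θ by ring, Real.rpow_add hpos]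
        ring
  have hlimR : Tendsto (fun t => M 0 (F T) - M t (F T - F t)
      + ∫ s in Ioo (0:ℝ) t, M' s (F T - F s)) (𝓝[<] T)
      (𝓝 (M 0 (F T) + ∫ s in Ioo (0:ℝ) T, M' s (F T - F s))) := by
    simpa using (tendsto_const_nhds.sub hbdry).add (tendsto_setIntegral_Ioo_left hT hInt)
  refine tendsto_nhds_unique_of_eventuallyEq (tendsto_setIntegral_Ioo_left hT hMf) hlimR ?_
  filter_upwards [Ioo_mem_nhdsLT hT] with t ht
  have hsub : Icc (0:ℝ) t ⊆ Ico 0 T := fun r hr => ⟨hr.1, hr.2.trans_lt ht.2⟩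
  refine integral_by_parts_Ioo ht.1.le
    (fun s hs => (hMderiv s (hsub hs)).continuousWithinAt.mono hsub) (fun s hs => ?_)
    (hM'cont.mono hsub) (hfint t ht.2) (hMf.mono_set (Ioo_subset_Ioo_right ht.2.le))
    (fun s hs => hF s (hsub hs)) (hFc.mono (Icc_subset_Icc_right ht.2.le)) (F T)
  exact (hMderiv s (hsub (Ioo_subset_Icc_self hs))).hasDerivAt
    (Ico_mem_nhds hs.1 (hs.2.trans ht.2))
end

section
/- Let X and Y be Banach spaces, T>0, θ∈(0,1] and 0≤δ<θ+1. Let m:[0,T)→L(X,Y) be continuous with ‖m(s)‖ ≤ C(T−s)^{−δ} for s∈[0,T), and let J:[0,T]→X be θ-Hölder continuous. Then lim_{t↑T} ∫_0^t m(s)(J(t)−J(s)) ds = ∫_0^T m(s)(J(T)−J(s)) ds in Y. -/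
/-! The proof is a single application of dominated convergence on `(0,T)` to the integrands
`1_{(0,t)}(s) m(s)(J(t)-J(s))`. For `s < t ≤ T` the Hölder bound gives
`‖m(s)(J(t)-J(s))‖ ≤ C (T-s)^{-δ} K (t-s)^θ ≤ C K (T-s)^{θ-δ}`, uniformly in `t`, and the right-hand
side is integrable on `(0,T)` because `θ - δ > -1`. Pointwise convergence is continuity of `J`
at `T`. -/

open MeasureTheory Set Filter

/-- The convergence claim (5.2) inside Theorem 5.1: for a continuous multiplier
`m` on `[0,T)` with `‖m(s)‖ ≤ C(T-s)^{-δ}`, `0 ≤ δ < θ + 1`, and a `θ`-Hölder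
function `J`, one has `∫_0^t m(s)(J(t)-J(s)) ds → ∫_0^T m(s)(J(T)-J(s)) ds` as
`t ↑ T`. -/
theorem stmt11
    {X Y : Type*} [NormedAddCommGroup X] [NormedSpace ℝ X]
    [NormedAddCommGroup Y] [NormedSpace ℝ Y] [CompleteSpace Y]
    (T θ δ C K : ℝ) (hT : 0 < T) (hθ : θ ∈ Ioc (0:ℝ) 1)
    (hδ0 : 0 ≤ δ) (hδ : δ < θ + 1)
    (m : ℝ → (X →L[ℝ] Y))
    (hmc : ContinuousOn m (Ico 0 T))
    (hmb : ∀ s ∈ Ico (0:ℝ) T, ‖m s‖ ≤ C * (T - s) ^ (-δ))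
    (J : ℝ → X)
    (hJ : ∀ s t : ℝ, 0 ≤ s → s ≤ t → t ≤ T → ‖J t - J s‖ ≤ K * (t - s) ^ θ) :
    Tendsto (fun t : ℝ => ∫ s in Ioo (0:ℝ) t, (m s) (J t - J s))
      (nhdsWithin T (Iio T))
      (nhds (∫ s in Ioo (0:ℝ) T, (m s) (J T - J s))) := by
  obtain ⟨hθ0, -⟩ := hθ
  have hC : 0 ≤ C := by
    have h := (norm_nonneg _).trans (hmb 0 ⟨le_rfl, hT⟩)
    exact nonneg_of_mul_nonneg_left h (Real.rpow_pos_of_pos (by linarith) _)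
  have hK : 0 ≤ K := by
    have h := (norm_nonneg _).trans (hJ 0 T le_rfl hT.le le_rfl)
    exact nonneg_of_mul_nonneg_left h (Real.rpow_pos_of_pos (by linarith) _)
  have hJ' : ∀ s ∈ Icc 0 T, ∀ t ∈ Icc 0 T, ‖J t - J s‖ ≤ K * |t - s| ^ θ := by
    intro s hs t ht
    rcases le_total s t with h | h
    · rw [abs_of_nonneg (by linarith)]
      exact hJ s t hs.1 h ht.2
    · rw [abs_sub_comm, abs_of_nonneg (by linarith), norm_sub_rev]
      exact hJ t s ht.1 h hs.2
  have hJc : ContinuousOn J (Icc 0 T) := by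
    intro s hs
    have hg : Continuous fun t : ℝ => K * |t - s| ^ θ :=
      continuous_const.mul ((by fun_prop : Continuous fun t : ℝ => |t - s|).rpow_const
        fun _ => Or.inr hθ0.le)
    have hg0 : Tendsto (fun t : ℝ => K * |t - s| ^ θ) (nhdsWithin s (Icc 0 T)) (nhds 0) := by
      have h := (hg.tendsto s).mono_left (nhdsWithin_le_nhds (s := Icc 0 T))
      simpa [Real.zero_rpow hθ0.ne'] using h
    refine tendsto_iff_norm_sub_tendsto_zero.2 (squeeze_zero' (.of_forall fun _ => norm_nonneg _)
      ?_ hg0)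
    filter_upwards [self_mem_nhdsWithin] with t ht using hJ' s hs t ht
  have hIoo : ∀ᶠ t in nhdsWithin T (Iio T), t ∈ Ioo 0 T := Ioo_mem_nhdsLT hT
  have hbound : IntegrableOn (fun s : ℝ => C * K * (T - s) ^ (θ - δ)) (Ioo 0 T) := by
    have h : IntervalIntegrable (fun s : ℝ => (T - s) ^ (θ - δ)) volume (T - T) (T - 0) :=
      (intervalIntegral.intervalIntegrable_rpow' (a := T) (b := 0)
        (by linarith : -1 < θ - δ)).comp_sub_left T
    have h' : IntegrableOn (fun s : ℝ => (T - s) ^ (θ - δ)) (Ioo 0 T) := by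
      rw [sub_self, sub_zero, intervalIntegrable_iff_integrableOn_Ioo_of_le hT.le] at h
      exact h
    exact h'.const_mul (C * K)
  have hrestrict : (fun t : ℝ => ∫ s in Ioo (0:ℝ) T,
      (Ioo (0:ℝ) t).indicator (fun s => (m s) (J t - J s)) s) =ᶠ[nhdsWithin T (Iio T)]
      fun t : ℝ => ∫ s in Ioo (0:ℝ) t, (m s) (J t - J s) := by
    filter_upwards [hIoo] with t ht
    rw [setIntegral_indicator measurableSet_Ioo,
      inter_eq_right.2 (Ioo_subset_Ioo_right ht.2.le)]
  refine Tendsto.congr' hrestrict ?_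
  refine tendsto_integral_filter_of_dominated_convergence
    (fun s : ℝ => C * K * (T - s) ^ (θ - δ)) ?_ ?_ hbound ?_
  · filter_upwards [hIoo] with t ht
    refine AEStronglyMeasurable.indicator ?_ measurableSet_Ioo
    refine ContinuousOn.aestronglyMeasurable ?_ measurableSet_Ioo
    exact (hmc.mono Ioo_subset_Ico_self).clm_apply
      (continuousOn_const.sub (hJc.mono Ioo_subset_Icc_self))
  · filter_upwards [hIoo] with t ht
    filter_upwards [ae_restrict_mem measurableSet_Ioo] with s hs
    have hTs : 0 < T - s := by linarith [hs.2]
    by_cases hst : s ∈ Ioo 0 t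
    · rw [indicator_of_mem hst]
      calc ‖(m s) (J t - J s)‖ ≤ ‖m s‖ * ‖J t - J s‖ := (m s).le_opNorm _
        _ ≤ (C * (T - s) ^ (-δ)) * (K * (t - s) ^ θ) := by
          gcongr
          · exact hmb s ⟨hs.1.le, hs.2⟩
          · exact hJ s t hs.1.le hst.2.le ht.2.le
        _ ≤ (C * (T - s) ^ (-δ)) * (K * (T - s) ^ θ) := by
          have : 0 ≤ t - s := by linarith [hst.2]
          have : t - s ≤ T - s := by linarith [ht.2]
          gcongr
        _ = C * K * (T - s) ^ (θ - δ) := by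
          rw [sub_eq_add_neg θ δ, Real.rpow_add hTs]
          ring
    · rw [indicator_of_notMem hst, norm_zero]
      positivity
  · filter_upwards [ae_restrict_mem measurableSet_Ioo] with s hs
    have hJT : Tendsto J (nhdsWithin T (Iio T)) (nhds (J T)) :=
      (hJc T ⟨hT.le, le_rfl⟩).mono_left
        (nhdsWithin_le_of_mem (by filter_upwards [hIoo] with t ht using Ioo_subset_Icc_self ht))
    have hlim : Tendsto (fun t => (m s) (J t - J s)) (nhdsWithin T (Iio T))
        (nhds ((m s) (J T - J s))) :=
      ((m s).continuous.tendsto _).comp (hJT.sub_const _)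
    refine hlim.congr' ?_
    -- once `t` has passed `s`, the indicator no longer affects the integrand at `s`
    filter_upwards [Ioo_mem_nhdsLT hs.2] with t ht
    rw [indicator_of_mem (show s ∈ Ioo 0 t from ⟨hs.1, ht.1⟩)]
end

section
/- Let (Ω,𝔽,ℙ) be a probability space, X a Banach space, T>0, p∈[1,∞) and 0<α<β. Let J:[0,T]×Ω→X be jointly strongly measurable and let φ:(0,T)→[0,∞) be integrable, such that for all 0≤s<t≤T one has 𝔼‖J(t)−J(s)‖^p ≤ (t−s)^{βp} φ(t). Then 𝔼 ∫_0^T ∫_0^T ‖J(t,·)−J(s,·)‖^p / |t−s|^{αp+1} ds dt ≤ (2 T^{(β−α)p} / ((β−α)p)) ∫_0^T φ(t) dt; in particular almost every path of J has finite W^{α,p}(0,T;X)-seminorm. -/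
/-!
By Tonelli the left-hand side is `∫∫ G(t,s) ds dt` over `(0,T)²`, where
`G(t,s) = 𝔼‖J(t)-J(s)‖^p / |t-s|^{αp+1}` is symmetric and vanishes on the diagonal, so it is twice
the integral over the triangle `s < t` (`lintegral_lintegral_eq_two_mul`).  There the hypothesis
gives `G(t,s) ≤ (t-s)^{γ-1} φ(t)` with `γ = (β-α)p > 0`, and
`∫_0^t (t-s)^{γ-1} ds = t^γ/γ ≤ T^γ/γ` (`lintegral_sub_rpow`).  Finiteness of the expectation gives
finiteness of almost every path seminorm.
-/

open MeasureTheory Set ENNReal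

lemma lintegral_sub_rpow {t γ : ℝ} (ht : 0 < t) (hγ : 0 < γ) :
    ∫⁻ s in Ioo (0:ℝ) t, ENNReal.ofReal ((t - s) ^ (γ - 1)) = ENNReal.ofReal (t ^ γ / γ) := by
  have hint : IntervalIntegrable (fun s : ℝ => (t - s) ^ (γ - 1)) volume 0 t := by
    have h := (intervalIntegral.intervalIntegrable_rpow' (a := 0) (b := t)
      (r := γ - 1) (by linarith)).comp_sub_left t
    simpa using h.symm
  have hI : ∫ s in (0:ℝ)..t, (t - s) ^ (γ - 1) = t ^ γ / γ := by
    rw [intervalIntegral.integral_comp_sub_left (fun x : ℝ => x ^ (γ - 1)) t,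
      integral_rpow (Or.inl (by linarith))]
    simp [Real.zero_rpow hγ.ne']
  rw [intervalIntegrable_iff_integrableOn_Ioo_of_le ht.le] at hint
  rw [← hI, intervalIntegral.integral_of_le ht.le, integral_Ioc_eq_integral_Ioo,
    ofReal_integral_eq_lintegral_ofReal hint]
  filter_upwards [ae_restrict_mem measurableSet_Ioo] with s hs
  exact Real.rpow_nonneg (by linarith [hs.2]) _

lemma lintegral_lintegral_eq_two_mul (μ : Measure ℝ) [SFinite μ] (G : ℝ → ℝ → ℝ≥0∞)
    (hG : Measurable (Function.uncurry G)) (hsymm : ∀ t s, G t s = G s t)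
    (hdiag : ∀ t, G t t = 0) :
    ∫⁻ t, ∫⁻ s, G t s ∂μ ∂μ = 2 * ∫⁻ t, ∫⁻ s, (if s < t then G t s else 0) ∂μ ∂μ := by
  set K : ℝ → ℝ → ℝ≥0∞ := fun t s => if s < t then G t s else 0 with hK
  have hKm : Measurable (Function.uncurry K) :=
    Measurable.ite (measurableSet_lt measurable_snd measurable_fst) hG measurable_const
  have hGK : ∀ t s, G t s = K t s + K s t := by
    intro t s
    rcases lt_trichotomy s t with h | h | h
    · simp [hK, h, h.not_gt]
    · simp [hK, h, hdiag]
    · simp [hK, h, h.not_gt, hsymm t s]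
  calc ∫⁻ t, ∫⁻ s, G t s ∂μ ∂μ
      = ∫⁻ t, (∫⁻ s, K t s ∂μ + ∫⁻ s, K s t ∂μ) ∂μ := by
        refine lintegral_congr fun t => ?_
        simp_rw [hGK]
        exact lintegral_add_left (hKm.comp measurable_prodMk_left) _
    _ = ∫⁻ t, ∫⁻ s, K t s ∂μ ∂μ + ∫⁻ t, ∫⁻ s, K s t ∂μ ∂μ :=
        lintegral_add_left hKm.lintegral_prod_right' _
    _ = 2 * ∫⁻ t, ∫⁻ s, K t s ∂μ ∂μ := by
        rw [two_mul, lintegral_lintegral_swap hKm.aemeasurable]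

/-- The Fubini-type estimate (4.5) in Proposition 4.4(1): if
`𝔼‖J(t)-J(s)‖^p ≤ (t-s)^{βp} φ(t)` for `0 ≤ s < t ≤ T` with `φ` integrable,
then `𝔼 ∫_0^T ∫_0^T ‖J(t)-J(s)‖^p/|t-s|^{αp+1} ds dt
  ≤ (2 T^{(β-α)p}/((β-α)p)) ∫_0^T φ(t) dt`, and in particular almost every
path of `J` has finite `W^{α,p}(0,T;X)`-seminorm. -/
theorem stmt12
    {Ω : Type*} [MeasurableSpace Ω] (ℙ : Measure Ω) [IsProbabilityMeasure ℙ]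
    {X : Type*} [NormedAddCommGroup X]
    (T p α β : ℝ) (hT : 0 < T) (hp : 1 ≤ p) (hα : 0 < α) (hαβ : α < β)
    (J : ℝ → Ω → X) (hJ : StronglyMeasurable (Function.uncurry J))
    (φ : ℝ → ℝ) (hφ : IntegrableOn φ (Ioo 0 T)) (hφ0 : ∀ t ∈ Ioo (0:ℝ) T, 0 ≤ φ t)
    (hbound : ∀ s t : ℝ, 0 ≤ s → s < t → t ≤ T →
      (∫⁻ ω, ENNReal.ofReal (‖J t ω - J s ω‖ ^ p) ∂ℙ) ≤
        ENNReal.ofReal ((t - s) ^ (β * p) * φ t)) :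
    (∫⁻ ω, (∫⁻ t in Ioo (0:ℝ) T, ∫⁻ s in Ioo (0:ℝ) T,
        ENNReal.ofReal (‖J t ω - J s ω‖ ^ p / |t - s| ^ (α * p + 1))) ∂ℙ) ≤
      ENNReal.ofReal (2 * T ^ ((β - α) * p) / ((β - α) * p) * ∫ t in Ioo (0:ℝ) T, φ t) ∧
    ∀ᵐ ω ∂ℙ, (∫⁻ t in Ioo (0:ℝ) T, ∫⁻ s in Ioo (0:ℝ) T,
        ENNReal.ofReal (‖J t ω - J s ω‖ ^ p / |t - s| ^ (α * p + 1))) < ⊤ := by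
  set γ : ℝ := (β - α) * p with hγdef
  have hp0 : 0 < p := by linarith
  have hγ : 0 < γ := mul_pos (by linarith) hp0
  set μ : Measure ℝ := volume.restrict (Ioo (0:ℝ) T) with hμ
  set F : ℝ → ℝ → Ω → ℝ≥0∞ := fun t s ω =>
    ENNReal.ofReal (‖J t ω - J s ω‖ ^ p / |t - s| ^ (α * p + 1)) with hF
  have hFm : Measurable (fun q : (ℝ × ℝ) × Ω => F q.1.1 q.1.2 q.2) := by
    have h1 : StronglyMeasurable (fun q : (ℝ × ℝ) × Ω => J q.1.1 q.2) :=
      hJ.comp_measurable (g := fun q : (ℝ × ℝ) × Ω => (q.1.1, q.2)) (by fun_prop)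
    have h2 : StronglyMeasurable (fun q : (ℝ × ℝ) × Ω => J q.1.2 q.2) :=
      hJ.comp_measurable (g := fun q : (ℝ × ℝ) × Ω => (q.1.2, q.2)) (by fun_prop)
    have h3 : Measurable (fun q : (ℝ × ℝ) × Ω => ‖J q.1.1 q.2 - J q.1.2 q.2‖) :=
      (h1.sub h2).norm.measurable
    have h4 : Measurable (fun q : (ℝ × ℝ) × Ω => |q.1.1 - q.1.2|) := by fun_prop
    exact ((h3.pow_const p).div (h4.pow_const _)).ennreal_ofReal
  have hFm' : Measurable (fun q : (Ω × ℝ) × ℝ => F q.1.2 q.2 q.1.1) :=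
    hFm.comp (g := fun q : (ℝ × ℝ) × Ω => F q.1.1 q.1.2 q.2)
      (f := fun q : (Ω × ℝ) × ℝ => ((q.1.2, q.2), q.1.1)) (by fun_prop)
  have hPm : Measurable (fun q : Ω × ℝ => ∫⁻ s, F q.2 s q.1 ∂μ) := hFm'.lintegral_prod_right'
  set G : ℝ → ℝ → ℝ≥0∞ := fun t s => ∫⁻ ω, F t s ω ∂ℙ with hG
  have hGm : Measurable (Function.uncurry G) := hFm.lintegral_prod_right'
  have hswap : ∫⁻ ω, ∫⁻ t, ∫⁻ s, F t s ω ∂μ ∂μ ∂ℙ = ∫⁻ t, ∫⁻ s, G t s ∂μ ∂μ := by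
    rw [lintegral_lintegral_swap hPm.aemeasurable]
    refine lintegral_congr fun t => ?_
    have : Measurable (fun q : Ω × ℝ => F t q.2 q.1) :=
      hFm.comp (g := fun q : (ℝ × ℝ) × Ω => F q.1.1 q.1.2 q.2)
        (f := fun q : Ω × ℝ => ((t, q.2), q.1)) (by fun_prop)
    exact lintegral_lintegral_swap this.aemeasurable
  have hsymm : ∀ t s, G t s = G s t := fun t s => by
    simp only [hG, hF]
    simp_rw [norm_sub_rev (J t _), abs_sub_comm t s]
  have hdiag : ∀ t, G t t = 0 := fun t => by simp [hG, hF, Real.zero_rpow hp0.ne']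
  have hGle : ∀ t ∈ Ioo (0:ℝ) T, ∀ s, 0 < s → s < t →
      G t s ≤ ENNReal.ofReal ((t - s) ^ (γ - 1)) * ENNReal.ofReal (φ t) := by
    intro t ht s hs hst
    have hts : 0 < t - s := sub_pos.2 hst
    set c : ℝ := ((t - s) ^ (α * p + 1))⁻¹ with hc
    have hc0 : 0 ≤ c := by positivity
    have hGeq : G t s = (∫⁻ ω, ENNReal.ofReal (‖J t ω - J s ω‖ ^ p) ∂ℙ) * ENNReal.ofReal c := by
      rw [← lintegral_mul_const' _ _ ofReal_ne_top]
      refine lintegral_congr fun ω => ?_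
      simp only [hF]
      rw [abs_of_pos hts, div_eq_mul_inv, ENNReal.ofReal_mul (by positivity)]
    rw [hGeq]
    refine (mul_le_mul_left (hbound s t hs.le hst ht.2.le) _).trans_eq ?_
    rw [← ENNReal.ofReal_mul (mul_nonneg (by positivity) (hφ0 t ht)),
      ← ENNReal.ofReal_mul (by positivity)]
    congr 1
    have : (t - s) ^ (γ - 1) = (t - s) ^ (β * p) * c := by
      rw [hc, ← Real.rpow_neg hts.le, ← Real.rpow_add hts]
      congr 1
      rw [hγdef]
      ring
    rw [this]
    ring
  have hinner : ∀ t ∈ Ioo (0:ℝ) T, ∫⁻ s, (if s < t then G t s else 0) ∂μ ≤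
      ENNReal.ofReal (T ^ γ / γ) * ENNReal.ofReal (φ t) := by
    intro t ht
    calc ∫⁻ s, (if s < t then G t s else 0) ∂μ
        ≤ ∫⁻ s in Ioo (0:ℝ) T, (Ioo (0:ℝ) t).indicator (fun s =>
            ENNReal.ofReal ((t - s) ^ (γ - 1)) * ENNReal.ofReal (φ t)) s := by
          refine setLIntegral_mono' measurableSet_Ioo fun s hs => ?_
          by_cases h : s < t
          · rw [if_pos h, indicator_of_mem (show s ∈ Ioo 0 t from ⟨hs.1, h⟩)]
            exact hGle t ht s hs.1 h
          · simp [h]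
      _ ≤ ∫⁻ s, (Ioo (0:ℝ) t).indicator (fun s =>
            ENNReal.ofReal ((t - s) ^ (γ - 1)) * ENNReal.ofReal (φ t)) s :=
          setLIntegral_le_lintegral _ _
      _ = ENNReal.ofReal (t ^ γ / γ) * ENNReal.ofReal (φ t) := by
          rw [lintegral_indicator measurableSet_Ioo, lintegral_mul_const' _ _ ofReal_ne_top,
            lintegral_sub_rpow ht.1 hγ]
      _ ≤ ENNReal.ofReal (T ^ γ / γ) * ENNReal.ofReal (φ t) := by
          gcongr
          · exact ht.1.le
          · exact ht.2.le
  have hφint : ∫⁻ t, ENNReal.ofReal (φ t) ∂μ = ENNReal.ofReal (∫ t, φ t ∂μ) := by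
    refine (ofReal_integral_eq_lintegral_ofReal hφ ?_).symm
    filter_upwards [ae_restrict_mem measurableSet_Ioo] with t ht using hφ0 t ht
  have hmain : ∫⁻ ω, ∫⁻ t, ∫⁻ s, F t s ω ∂μ ∂μ ∂ℙ ≤
      ENNReal.ofReal (2 * T ^ γ / γ * ∫ t, φ t ∂μ) := by
    rw [hswap, lintegral_lintegral_eq_two_mul μ G hGm hsymm hdiag]
    calc 2 * ∫⁻ t, ∫⁻ s, (if s < t then G t s else 0) ∂μ ∂μ
        ≤ 2 * ∫⁻ t, ENNReal.ofReal (T ^ γ / γ) * ENNReal.ofReal (φ t) ∂μ := by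
          gcongr 2 * ?_
          exact setLIntegral_mono' measurableSet_Ioo hinner
      _ = ENNReal.ofReal (2 * T ^ γ / γ * ∫ t, φ t ∂μ) := by
          rw [lintegral_const_mul' _ _ ofReal_ne_top, hφint, mul_div_assoc, mul_assoc,
            ENNReal.ofReal_mul zero_le_two, ENNReal.ofReal_mul (by positivity)]
          simp
  exact ⟨hmain, ae_lt_top hPm.lintegral_prod_right' (hmain.trans_lt ofReal_lt_top).ne⟩
end
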